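/- arXiv:2306.00109 — 4 statements merged into one kernel-verified Lean document; each statement's English description precedes it below -/
import Mathlib

section
/- Let B be an integral residuated lattice and F a compatible congruence filter of B, and for x ∈ B∖F let σ(x) denote the minimum and γ(x) the maximum of [x]_F. Then (σ, γ) form a residuated pair on B∖F: for all x, y ∈ B∖F, σ(x) ≤ y if and only if x ≤ γ(y). -/
/-- An integral residuated lattice: a lattice, a monoid, residuation for the two
divisions `ld x z` (i.e. `x \ z`) and `rd z y` (i.e. `z / y`), with `1` the top. -/
class IRL (α : Type*) extends Lattice α, Monoid α where
  ld : α → α → α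
  rd : α → α → α
  mul_le_iff_ld : ∀ x y z : α, x * y ≤ z ↔ y ≤ ld x z
  mul_le_iff_rd : ∀ x y z : α, x * y ≤ z ↔ x ≤ rd z y
  le_one : ∀ x : α, x ≤ 1

namespace IRL

variable {α : Type*} [IRL α]

/-- `theta F x y` iff `x\y ∈ F` and `y\x ∈ F`. -/
def theta (F : Set α) (x y : α) : Prop := ld x y ∈ F ∧ ld y x ∈ F

/-- The equivalence class `[x]_F`. -/
def cls (F : Set α) (x : α) : Set α := {y | theta F x y}

/-- A congruence filter of an IRL. -/
structure IsCongFilter (F : Set α) : Prop where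
  nonempty : F.Nonempty
  upward : ∀ x ∈ F, ∀ y : α, x ≤ y → y ∈ F
  mul_mem : ∀ x ∈ F, ∀ y ∈ F, x * y ∈ F
  conjL : ∀ x ∈ F, ∀ y : α, ld y (x * y) ∈ F
  conjR : ∀ x ∈ F, ∀ y : α, rd (y * x) y ∈ F

end IRL

/-!
Both `σ x ≤ y` and `x ≤ γ y` say that `x \ y ∈ F`. Indeed, if `x \ y ∈ F`, then `x ⊓ y` lies in
`[x]_F`, because `x \ (x ⊓ y) = x \ y`, and `x ⊔ y` lies in `[y]_F`, because
`(x ⊔ y) \ y = x \ y`; hence `σ x ≤ x ⊓ y` and `x ⊔ y ≤ γ y`. Conversely, `x \ σ x ∈ F` and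
`γ y \ y ∈ F`, and the division `\` is antitone on the left and monotone on the right.
-/

namespace IRL

variable {α : Type*} [IRL α] {F : Set α} {x y s g : α}

theorem gc_mul_ld (x : α) : GaloisConnection (x * ·) (ld x) :=
  mul_le_iff_ld x

theorem gc_mul_rd (y : α) : GaloisConnection (· * y) (rd · y) :=
  fun x z => mul_le_iff_rd x y z

theorem ld_inf (x y z : α) : ld x (y ⊓ z) = ld x y ⊓ ld x z :=
  (gc_mul_ld x).u_inf

theorem sup_ld (x y z : α) : ld (x ⊔ y) z = ld x z ⊓ ld y z :=
  eq_of_forall_le_iff fun w => by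
    have sup_mul : (x ⊔ y) * w = x * w ⊔ y * w := (gc_mul_rd w).l_sup
    rw [← mul_le_iff_ld, sup_mul, sup_le_iff, le_inf_iff, mul_le_iff_ld, mul_le_iff_ld]

theorem ld_antitone_left (z : α) : Antitone (ld · z) := fun x y hxy =>
  inf_eq_right.1 (by rw [← sup_ld, sup_eq_right.2 hxy])

theorem ld_eq_one_iff : ld x y = 1 ↔ x ≤ y := by
  rw [← (le_one (ld x y)).ge_iff_eq, ← mul_le_iff_ld, mul_one]

theorem ld_inf_self_left (x y : α) : ld x (x ⊓ y) = ld x y := by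
  rw [ld_inf, ld_eq_one_iff.2 le_rfl, inf_eq_right.2 (le_one _)]

theorem sup_ld_self_right (x y : α) : ld (x ⊔ y) y = ld x y := by
  rw [sup_ld, ld_eq_one_iff.2 le_rfl, inf_eq_left.2 (le_one _)]

theorem inf_mem_cls_left (hF : IsUpperSet F) (h : ld x y ∈ F) : x ⊓ y ∈ cls F x := by
  refine ⟨?_, ?_⟩
  · rwa [ld_inf_self_left]
  · rw [ld_eq_one_iff.2 inf_le_left]
    exact hF (le_one _) h

theorem sup_mem_cls_right (hF : IsUpperSet F) (h : ld x y ∈ F) : x ⊔ y ∈ cls F y := by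
  refine ⟨?_, ?_⟩
  · rw [ld_eq_one_iff.2 le_sup_right]
    exact hF (le_one _) h
  · rwa [sup_ld_self_right]

theorem le_iff_ld_mem_of_isLeast_cls (hF : IsUpperSet F) (hs : IsLeast (cls F x) s) :
    s ≤ y ↔ ld x y ∈ F :=
  ⟨fun h => hF ((gc_mul_ld x).monotone_u h) hs.1.1,
    fun h => (hs.2 (inf_mem_cls_left hF h)).trans inf_le_right⟩

theorem le_iff_ld_mem_of_isGreatest_cls (hF : IsUpperSet F) (hg : IsGreatest (cls F y) g) :
    x ≤ g ↔ ld x y ∈ F :=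
  ⟨fun h => hF (ld_antitone_left y h) hg.1.2,
    fun h => le_sup_left.trans (hg.2 (sup_mem_cls_right hF h))⟩

end IRL

theorem sigma_gamma_residuated_pair_general {B : Type*} [IRL B] {F : Set B} (hF : IsUpperSet F)
    {x y s g : B} (hs : IsLeast (IRL.cls F x) s) (hg : IsGreatest (IRL.cls F y) g) :
    s ≤ y ↔ x ≤ g :=
  (IRL.le_iff_ld_mem_of_isLeast_cls hF hs).trans (IRL.le_iff_ld_mem_of_isGreatest_cls hF hg).symm

/-- if `F` is a compatible congruence filter of an IRL `B`, with `σ x`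
the minimum and `γ x` the maximum of `[x]_F` (for `x ∉ F`), then `(σ, γ)` form a
residuated pair on `B ∖ F`: `σ x ≤ y ↔ x ≤ γ y` for all `x, y ∉ F`. -/
theorem sigma_gamma_residuated_pair {B : Type*} [IRL B] (F : Set B)
    (hF : IRL.IsCongFilter F)
    (σ γ : B → B)
    (hstrict : ∀ f ∈ F, ∀ b : B, b ∉ F → b < f)
    (hσ : ∀ x : B, x ∉ F → IsLeast (IRL.cls F x) (σ x))
    (hγ : ∀ x : B, x ∉ F → IsGreatest (IRL.cls F x) (γ x))
    (habs : ∀ b : B, b ∉ F → ∀ x : B, x ∉ F →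
      (∃ u : B, u ∉ F ∧ b * σ x = σ u) ∧ (∃ v : B, v ∉ F ∧ σ x * b = σ v)) :
    ∀ x : B, x ∉ F → ∀ y : B, y ∉ F → (σ x ≤ y ↔ x ≤ γ y) :=
  fun x hx y hy =>
    sigma_gamma_residuated_pair_general (fun a b hab ha => hF.upward a ha b hab) (hσ x hx) (hγ y hy)
end

section
/- Let B be an integral residuated lattice and F a compatible congruence filter of B, and for x ∈ B∖F let σ(x) denote the minimum of [x]_F. Then for all x, y ∈ B∖F: x·y ≤ σ(x) and y·x ≤ σ(x). -/
/-!
Both residuals `x \ σ x` and `σ x / x` lie in `F`: the first because `σ x` is congruent to `x`, the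
second because `F` is closed under conjugation. Every `y ∉ F` is below all of `F`, hence below both
residuals, and residuation turns this into the two inequalities.
-/

namespace IRL

variable {α : Type*} [IRL α]

theorem mul_ld_le (x z : α) : x * ld x z ≤ z :=
  (mul_le_iff_ld x (ld x z) z).2 le_rfl

theorem rd_mul_le (z y : α) : rd z y * y ≤ z :=
  (mul_le_iff_rd (rd z y) y z).2 le_rfl

theorem rd_mono_left (y : α) : Monotone fun z : α => rd z y :=
  fun z _ hz => (mul_le_iff_rd _ _ _).1 ((rd_mul_le z y).trans hz)

theorem IsCongFilter.rd_mem_of_ld_mem {F : Set α} (hF : IsCongFilter F) {x z : α}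
    (h : ld x z ∈ F) : rd z x ∈ F :=
  hF.upward _ (hF.conjR _ h x) _ (rd_mono_left x (mul_ld_le x z))

end IRL

theorem mul_le_sigma_general {B : Type*} [IRL B] {F : Set B} (hF : IRL.IsCongFilter F) {x y z : B}
    (hy : y ∈ lowerBounds F) (hz : IRL.ld x z ∈ F) : x * y ≤ z ∧ y * x ≤ z :=
  ⟨(IRL.mul_le_iff_ld x y z).2 (hy hz),
    (IRL.mul_le_iff_rd y x z).2 (hy (hF.rd_mem_of_ld_mem hz))⟩

/-- if `F` is a compatible congruence filter of an IRL `B` and `σ x`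
is the minimum of `[x]_F` (for `x ∉ F`), then `x·y ≤ σ x` and `y·x ≤ σ x` for all
`x, y ∉ F`. -/
theorem mul_le_sigma {B : Type*} [IRL B] (F : Set B)
    (hF : IRL.IsCongFilter F)
    (σ γ : B → B)
    (hstrict : ∀ f ∈ F, ∀ b : B, b ∉ F → b < f)
    (hσ : ∀ x : B, x ∉ F → IsLeast (IRL.cls F x) (σ x))
    (hγ : ∀ x : B, x ∉ F → IsGreatest (IRL.cls F x) (γ x))
    (habs : ∀ b : B, b ∉ F → ∀ x : B, x ∉ F →
      (∃ u : B, u ∉ F ∧ b * σ x = σ u) ∧ (∃ v : B, v ∉ F ∧ σ x * b = σ v)) :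
    ∀ x : B, x ∉ F → ∀ y : B, y ∉ F → x * y ≤ σ x ∧ y * x ≤ σ x :=
  fun x hx y hy =>
    mul_le_sigma_general hF (fun f hf => (hstrict f hf y hy).le) (hσ x hx).1.1
end

section
/- Let A be a GL₂-chain that has no coatom, i.e., there is no c ∈ A with c < 1 and x ≤ c for every x < 1. Then every element of A is idempotent: x·x = x for all x ∈ A (A is a Gödel algebra). -/
/-- A `GL₂`-chain: a bounded commutative integral residuated chain that is 2-potent
(`x·x·x = x·x`) and satisfies `x = 1 ∨ x·(x ∧ y) ≤ (x ∧ y)²`. -/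
class GL2Chain (α : Type*) extends LinearOrder α, CommMonoid α where
  bot : α
  bot_le : ∀ x : α, bot ≤ x
  le_one : ∀ x : α, x ≤ 1
  himp : α → α → α
  mul_le_iff : ∀ x y z : α, x * y ≤ z ↔ y ≤ himp x z
  pot2 : ∀ x : α, x * x * x = x * x
  gl2 : ∀ x y : α, x = 1 ∨ x * min x y ≤ min x y * min x y

section Residual

variable {α : Type*} [LinearOrder α] [MulOneClass α]

lemma residual_lt_one_iff {a b : α} {r : α → α} (gc : GaloisConnection (a * ·) r) :
    r b < 1 ↔ b < a := by
  simpa only [mul_one] using (gc.lt_iff_lt (a := 1) (b := b)).symm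

lemma isGreatest_Iio_one_residual_mul_self {a : α} {r : α → α}
    (gc : GaloisConnection (a * ·) r) (gl2 : ∀ y : α, y < 1 → a ≤ y → a * y ≤ a * a)
    (ha : a * a < a) : IsGreatest (Set.Iio 1) (r (a * a)) := by
  refine ⟨(residual_lt_one_iff gc).2 ha, fun y hy => gc.le_u ?_⟩
  rcases le_total a y with hay | hya
  · exact gl2 y hy hay
  · exact gc.monotone_l hya

theorem GL2_no_coatom_idempotent_general {himp : α → α → α} (le_one : ∀ x : α, x ≤ 1)
    (gc : ∀ x : α, GaloisConnection (x * ·) (himp x))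
    (gl2 : ∀ x y : α, y < 1 → x ≤ y → x * y ≤ x * x)
    (h : ¬ ∃ c : α, IsGreatest (Set.Iio 1) c) (x : α) : x * x = x := by
  have mul_self_le : x * x ≤ x := ((gc x).monotone_l (le_one x)).trans_eq (mul_one x)
  by_contra hne
  exact h ⟨himp x (x * x),
    isGreatest_Iio_one_residual_mul_self (gc x) (gl2 x) (mul_self_le.lt_of_ne hne)⟩

end Residual

namespace GL2Chain

variable {α : Type*} [GL2Chain α]

lemma gc_mul_himp (x : α) : GaloisConnection (x * ·) (himp x) :=
  mul_le_iff x

lemma mul_le_mul_self_of_lt_one_of_le (x y : α) (hy : y < 1) (hxy : x ≤ y) :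
    x * y ≤ x * x := by
  simpa only [min_eq_right hxy, mul_comm y x] using (gl2 y x).resolve_left hy.ne

end GL2Chain

/-- a GL₂-chain with no coatom is a Gödel algebra: every element is
idempotent. -/
theorem GL2_no_coatom_idempotent {α : Type*} [GL2Chain α]
    (h : ¬ ∃ c : α, c < 1 ∧ ∀ x : α, x < 1 → x ≤ c) :
    ∀ x : α, x * x = x :=
  GL2_no_coatom_idempotent_general GL2Chain.le_one GL2Chain.gc_mul_himp
    GL2Chain.mul_le_mul_self_of_lt_one_of_le h
end

section
/- (Local finiteness of GL₂-chains.) Let A be a GL₂-chain and X ⊆ A a finite subset. Then the smallest subset of A containing X ∪ {0, 1} and closed under the operations min, max, · and → is finite. -/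
/-!
The last axiom says that `x * y = y * y` whenever `y ≤ x ≠ 1`, so a product is one of its factors
or the square of one. By residuation `x → z` is the greatest element of `{y | x * y ≤ z}`;
this set is everything, or everything below `z`, or everything below `1`, or `{y | y * y ≤ z}`.
Hence new elements arise from old ones only by squaring, by passing to the greatest
`w` with `w * w ≤ z`, and by adjoining the coatom if there is one. By 2-potency such a `w` depends
only on `z * z` and satisfies `w * w = z * z`, so a single round of these operations is enough.
-/

open Set

theorem subsingleton_setOf_isGreatest {P : Type*} [PartialOrder P] (s : Set P) :
    {a | IsGreatest s a}.Subsingleton :=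
  fun _ ha _ hb => ha.unique hb

/-- `w` is the square root of `z` rounded down: the greatest element whose square is at most `z`.
It is a relation because such an element need not exist. -/
def IsFloorSqrt {M : Type*} [Mul M] [LE M] (z w : M) : Prop :=
  IsGreatest {y | y * y ≤ z} w

/-- The elements of `Z`, their squares and their rounded-down square roots. In a `GL₂`-chain this
set is closed under further squaring and root extraction. -/
def sqrtHull {M : Type*} [Mul M] [LE M] (Z : Set M) : Set M :=
  Z ∪ (fun z => z * z) '' Z ∪ ⋃ z ∈ Z, {w | IsFloorSqrt z w}

section SqrtHull

variable {M : Type*} [Mul M] [LE M] {Z : Set M} {z w : M}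

theorem subset_sqrtHull : Z ⊆ sqrtHull Z :=
  fun _ hz => Or.inl (Or.inl hz)

theorem mul_self_mem_sqrtHull_of_mem (hz : z ∈ Z) : z * z ∈ sqrtHull Z :=
  Or.inl (Or.inr (mem_image_of_mem _ hz))

theorem IsFloorSqrt.mem_sqrtHull_of_mem (hw : IsFloorSqrt z w) (hz : z ∈ Z) : w ∈ sqrtHull Z :=
  Or.inr (mem_biUnion hz hw)

theorem finite_sqrtHull {P : Type*} [Mul P] [PartialOrder P] {Z : Set P} (hZ : Z.Finite) :
    (sqrtHull Z).Finite :=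
  (hZ.union (hZ.image _)).union
    (hZ.biUnion fun _ _ => (subsingleton_setOf_isGreatest _).finite)

end SqrtHull

theorem isIdempotentElem_mul_self {S : Type*} [Semigroup S] {a : S}
    (ha : a * a * a = a * a) : IsIdempotentElem (a * a) := by
  rw [IsIdempotentElem, ← mul_assoc, ha, ha]

section OrderedMonoid

variable {M : Type*} [CommMonoid M]

theorem mul_self_le_iff_le_mul_self [Preorder M] [IsOrderedMonoid M] {y z : M}
    (hy : y * y * y = y * y) (hz : z ≤ 1) : y * y ≤ z ↔ y * y ≤ z * z where
  mp h := (isIdempotentElem_mul_self hy).ge.trans (mul_le_mul' h h)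
  mpr h := h.trans (mul_le_of_le_one_left' hz)

theorem IsFloorSqrt.mul_self_eq [PartialOrder M] [IsOrderedMonoid M] {z w : M}
    (h : IsFloorSqrt z w) (hw : w * w * w = w * w) (hz : z ≤ 1) : w * w = z * z :=
  have hzw : z ≤ w := h.2 (mul_le_of_le_one_left' hz)
  le_antisymm ((mul_self_le_iff_le_mul_self hw hz).1 h.1) (mul_le_mul' hzw hzw)

end OrderedMonoid

namespace GL2Chain

variable {α : Type*} [GL2Chain α] {x y z w : α} {Z : Set α}

theorem isGreatest_himp (x z : α) : IsGreatest {y | x * y ≤ z} (himp x z) :=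
  ⟨(mul_le_iff x _ z).2 le_rfl, fun y => (mul_le_iff x y z).1⟩

instance : IsOrderedMonoid α where
  mul_le_mul_left a b hab c := by
    rw [mul_comm a, mul_comm b]
    exact (mul_le_iff c a _).2 (hab.trans ((mul_le_iff c b _).1 le_rfl))

theorem isFloorSqrt_congr (h : x * x = y * y) : IsFloorSqrt x w ↔ IsFloorSqrt y w := by
  have hsq (u : α) : {v | v * v ≤ u} = {v | v * v ≤ u * u} :=
    Set.ext fun v => mul_self_le_iff_le_mul_self (pot2 v) (le_one u)
  rw [IsFloorSqrt, IsFloorSqrt, hsq x, hsq y, h]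

theorem mul_eq_mul_self_of_le (hx : x ≠ 1) (hyx : y ≤ x) : x * y = y * y := by
  have hle : x * y ≤ y * y := by simpa [hyx] using (gl2 x y).resolve_left hx
  exact hle.antisymm (mul_le_mul_left hyx y)

theorem mul_eq_min_or_eq_mul_self_min (x y : α) :
    x * y = min x y ∨ x * y = min x y * min x y := by
  wlog hyx : y ≤ x generalizing x y
  · simpa only [mul_comm, min_comm] using this y x (le_of_not_ge hyx)
  rw [min_eq_right hyx]
  by_cases hx : x = 1
  · exact Or.inl (by rw [hx, one_mul])
  · exact Or.inr (mul_eq_mul_self_of_le hx hyx)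

theorem setOf_mul_le_eq_Iio_one (hzx : z < x) (hxz : x * x ≤ z) : {y | x * y ≤ z} = Iio 1 := by
  ext y
  refine ⟨fun hy => (le_one y).lt_of_ne ?_, fun hy => ?_⟩
  · rintro rfl
    exact hzx.not_ge (by simpa using hy)
  · rcases le_total y x with hyx | hxy
    · exact (mul_le_mul_right hyx x).trans hxz
    · calc x * y = y * x := mul_comm x y
        _ = x * x := mul_eq_mul_self_of_le (ne_of_lt hy) hxy
        _ ≤ z := hxz

theorem setOf_mul_le_eq_setOf_mul_self_le (hx : x ≠ 1) (hzx : z < x * x) :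
    {y | x * y ≤ z} = {y | y * y ≤ z} := by
  ext y
  rcases le_total y x with hyx | hxy
  · rw [mem_ofPred_eq, mem_ofPred_eq, mul_eq_mul_self_of_le hx hyx]
  · exact iff_of_false (hzx.trans_le (mul_le_mul_right hxy x)).not_ge
      (hzx.trans_le (mul_le_mul' hxy hxy)).not_ge

theorem himp_eq_one (hxz : x ≤ z) : himp x z = 1 :=
  (le_one _).antisymm ((isGreatest_himp x z).2 (by simpa using hxz))

theorem one_himp (z : α) : himp 1 z = z :=
  (isGreatest_himp 1 z).unique (by simp [IsGreatest, mem_upperBounds])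

theorem himp_cases (x z : α) :
    himp x z = 1 ∨ himp x z = z ∨ IsGreatest (Iio 1) (himp x z) ∨ IsFloorSqrt z (himp x z) := by
  rcases le_or_gt x z with hxz | hzx
  · exact Or.inl (himp_eq_one hxz)
  rcases eq_or_ne x 1 with rfl | hx
  · exact Or.inr (Or.inl (one_himp z))
  have h : IsGreatest {y | x * y ≤ z} (himp x z) := isGreatest_himp x z
  rcases le_or_gt (x * x) z with hxxz | hzxx
  · rw [setOf_mul_le_eq_Iio_one hzx hxxz] at h
    exact Or.inr (Or.inr (Or.inl h))
  · rw [setOf_mul_le_eq_setOf_mul_self_le hx hzxx] at h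
    exact Or.inr (Or.inr (Or.inr h))

theorem exists_mul_self_eq_of_mem_sqrtHull (hx : x ∈ sqrtHull Z) : ∃ z ∈ Z, x * x = z * z := by
  rcases hx with (hx | ⟨z, hz, rfl⟩) | hx
  · exact ⟨x, hx, rfl⟩
  · exact ⟨z, hz, isIdempotentElem_mul_self (pot2 z)⟩
  · obtain ⟨z, hz, hxz⟩ := mem_iUnion₂.1 hx
    exact ⟨z, hz, hxz.mul_self_eq (pot2 x) (le_one z)⟩

theorem mul_self_mem_sqrtHull (hx : x ∈ sqrtHull Z) : x * x ∈ sqrtHull Z := by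
  obtain ⟨z, hz, hxz⟩ := exists_mul_self_eq_of_mem_sqrtHull hx
  exact hxz ▸ mul_self_mem_sqrtHull_of_mem hz

theorem mem_sqrtHull_of_isFloorSqrt (hx : x ∈ sqrtHull Z) (hw : IsFloorSqrt x w) :
    w ∈ sqrtHull Z := by
  obtain ⟨z, hz, hxz⟩ := exists_mul_self_eq_of_mem_sqrtHull hx
  exact ((isFloorSqrt_congr hxz).1 hw).mem_sqrtHull_of_mem hz

theorem mul_mem_sqrtHull (hx : x ∈ sqrtHull Z) (hy : y ∈ sqrtHull Z) : x * y ∈ sqrtHull Z := by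
  have hmin : min x y ∈ sqrtHull Z := min_rec' (· ∈ sqrtHull Z) hx hy
  rcases mul_eq_min_or_eq_mul_self_min x y with h | h
  · exact h ▸ hmin
  · exact h ▸ mul_self_mem_sqrtHull hmin

theorem himp_mem_sqrtHull (h1 : 1 ∈ Z) (hcoatom : {c | IsGreatest (Iio 1) c} ⊆ Z)
    (hy : y ∈ sqrtHull Z) : himp x y ∈ sqrtHull Z := by
  rcases himp_cases x y with h | h | h | h
  · exact h ▸ subset_sqrtHull h1
  · exact h.symm ▸ hy
  · exact subset_sqrtHull (hcoatom h)
  · exact mem_sqrtHull_of_isFloorSqrt hy h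

end GL2Chain

open GL2Chain in
/-- local finiteness of GL₂-chains: for a finite `X ⊆ A`, the smallest
subset of `A` containing `X ∪ {0, 1}` and closed under `min`, `max`, `·`, `→` is
finite. -/
theorem GL2_locally_finite {α : Type*} [GL2Chain α] (X : Set α) (hX : X.Finite) :
    (⋂₀ {T : Set α | X ⊆ T ∧ (GL2Chain.bot : α) ∈ T ∧ (1 : α) ∈ T ∧
        ∀ x ∈ T, ∀ y ∈ T,
          min x y ∈ T ∧ max x y ∈ T ∧ x * y ∈ T ∧ GL2Chain.himp x y ∈ T}).Finite := by
  let Z : Set α := X ∪ {bot, 1} ∪ {c | IsGreatest (Iio 1) c}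
  have hZ : Z.Finite :=
    (hX.union (toFinite _)).union (subsingleton_setOf_isGreatest _).finite
  have hXZ : X ⊆ Z := fun _ hx => Or.inl (Or.inl hx)
  have hbot : bot ∈ Z := Or.inl (Or.inr (Or.inl rfl))
  have hone : 1 ∈ Z := Or.inl (Or.inr (Or.inr rfl))
  have hcoatom : {c | IsGreatest (Iio 1) c} ⊆ Z := subset_union_right
  refine (finite_sqrtHull hZ).subset (sInter_subset_of_mem ⟨hXZ.trans subset_sqrtHull,
    subset_sqrtHull hbot, subset_sqrtHull hone, fun x hx y hy => ⟨?_, ?_, ?_, ?_⟩⟩)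
  · exact min_rec' (· ∈ sqrtHull Z) hx hy
  · exact max_rec' (· ∈ sqrtHull Z) hx hy
  · exact mul_mem_sqrtHull hx hy
  · exact himp_mem_sqrtHull hone hcoatom hy
end
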